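/- (Asymmetric Picone inequality) Let p > 1, a, b > 0 and let u, v be differentiable real functions on an open interval I with u ≥ 0 and v > 0 on I. Then at every point of I, a^p [(u')⁺]^p + b^p [(u')⁻]^p ≥ (u^p / v^{p−1})' · ( a^p [(v')⁺]^{p−1} − b^p [(v')⁻]^{p−1} ), where (u^p / v^{p−1})' denotes the derivative of the function t ↦ u(t)^p / v(t)^{p−1}. -/

import Mathlib

open Set

/-- `u` is C¹ on `[α, γ]` with derivative `u'` there. -/
def C1On (α γ : ℝ) (u u' : ℝ → ℝ) : Prop :=
  (∀ t ∈ Set.Icc α γ, HasDerivWithinAt u (u' t) (Set.Icc α γ) t) ∧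
  ContinuousOn u' (Set.Icc α γ)

/-- Admissible functions on `[0, L]`: C¹ with zero boundary values. -/
def Adm (L : ℝ) (u u' : ℝ → ℝ) : Prop :=
  C1On 0 L u u' ∧ u 0 = 0 ∧ u L = 0

/-- The asymmetric energy integrand `a^p (s⁺)^p + b^p (s⁻)^p`. -/
noncomputable def asymE (p a b s : ℝ) : ℝ :=
  a ^ p * (max s 0) ^ p + b ^ p * (max (-s) 0) ^ p

/-- The asymmetric flux `a^p (s⁺)^(p-1) - b^p (s⁻)^(p-1)`. -/
noncomputable def asymFlux (p a b s : ℝ) : ℝ :=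
  a ^ p * (max s 0) ^ (p - 1) - b ^ p * (max (-s) 0) ^ (p - 1)

/-- The first Dirichlet eigenvalue `λ^{a,b}_{1,p}(0,L)`, as the infimum of the
asymmetric energy over normalized admissible functions. -/
noncomputable def lam1 (p a b L : ℝ) : ℝ :=
  sInf { E : ℝ | ∃ u u' : ℝ → ℝ, Adm L u u' ∧
    (∫ t in (0:ℝ)..L, |u t| ^ p) = 1 ∧
    E = ∫ t in (0:ℝ)..L, asymE p a b (u' t) }

/-- `u` (a C¹ function on `[0,L]` with derivative `u'` and zero boundary values)
is a weak solution of `-Δ^{a,b}_p u = g` on `(0,L)`. -/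
def IsWeakSol (p a b L : ℝ) (u u' g : ℝ → ℝ) : Prop :=
  Adm L u u' ∧
  ∀ φ φ' : ℝ → ℝ, Adm L φ φ' →
    (∫ t in (0:ℝ)..L, asymFlux p a b (u' t) * φ' t) =
      ∫ t in (0:ℝ)..L, g t * φ t

/-!
Write `E` for the energy `asymE p a b` and `J` for the flux `asymFlux p a b`. Then `J` is
the derivative of the convex, positively `p`-homogeneous function `E / p`, whose tangent-line
inequality at `w`, rewritten with Euler's identity `J w * w = E w`, is
`p * (J w * x) ≤ E x + (p - 1) * E w`, which is Young's inequality for positive and negative parts.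
Taking `w = (u / v) * v'` and `x = u'`, homogeneity turns `p * (J w * x) - (p - 1) * E w` into
`(u ^ p / v ^ (p - 1))' * J v'`.
-/

theorem mul_rpow_sub_one_mul_le {p w x : ℝ} (hp : 1 < p) (hw : 0 ≤ w) (hx : 0 ≤ x) :
    p * (w ^ (p - 1) * x) ≤ x ^ p + (p - 1) * w ^ p := by
  have hp1 : 0 < p - 1 := sub_pos.mpr hp
  have conj_rpow : (w ^ (p - 1)) ^ (p / (p - 1)) = w ^ p := by
    rw [← Real.rpow_mul hw, mul_div_cancel₀ _ hp1.ne']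
  calc p * (w ^ (p - 1) * x) = p * (x * w ^ (p - 1)) := by rw [mul_comm x]
    _ ≤ p * (x ^ p / p + (w ^ (p - 1)) ^ (p / (p - 1)) / (p / (p - 1))) := by
      gcongr
      exact Real.young_inequality_of_nonneg hx (Real.rpow_nonneg hw _)
        (Real.HolderConjugate.conjExponent hp)
    _ = x ^ p + (p - 1) * w ^ p := by
      rw [conj_rpow]
      field_simp

theorem max_zero_rpow_sub_one_mul_self {p : ℝ} (hp0 : p ≠ 0) (hp1 : p ≠ 1) (s : ℝ) :
    max s 0 ^ (p - 1) * s = max s 0 ^ p := by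
  rcases le_or_gt s 0 with hs | hs
  · rw [max_eq_right hs, Real.zero_rpow (sub_ne_zero.mpr hp1), Real.zero_rpow hp0, zero_mul]
  · rw [max_eq_left hs.le, Real.rpow_sub_one hs.ne', div_mul_cancel₀ _ hs.ne']

theorem max_mul_zero_rpow {r : ℝ} (hr : 0 ≤ r) (s q : ℝ) :
    max (r * s) 0 ^ q = r ^ q * max s 0 ^ q := by
  rw [← Real.mul_rpow hr (le_max_right s 0), mul_max_of_nonneg _ _ hr, mul_zero]

theorem hasDerivAt_rpow_div_rpow_sub_one {p t u' v' : ℝ} {u v : ℝ → ℝ} (hp : u t ≠ 0 ∨ 1 ≤ p)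
    (hu : HasDerivAt u u' t) (hv : HasDerivAt v v' t) (hu0 : 0 ≤ u t) (hv0 : 0 < v t) :
    HasDerivAt (fun s => u s ^ p / v s ^ (p - 1))
      (p * (u t / v t) ^ (p - 1) * u' - (p - 1) * (u t / v t) ^ p * v') t := by
  have hvpow : 0 < v t ^ (p - 1) := Real.rpow_pos_of_pos hv0 _
  have hvp : v t ^ p = v t ^ (p - 1) * v t := by
    rw [Real.rpow_sub_one hv0.ne', div_mul_cancel₀ _ hv0.ne']
  refine ((hu.rpow_const hp).fun_div (hv.rpow_const (Or.inl hv0.ne')) hvpow.ne').congr_deriv ?_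
  rw [Real.div_rpow hu0 hv0.le, Real.div_rpow hu0 hv0.le, hvp, Real.rpow_sub_one hv0.ne' (p - 1)]
  field_simp

section AsymmetricEnergy

variable {p a b : ℝ}

theorem asymE_mul_of_nonneg {r : ℝ} (hr : 0 ≤ r) (s : ℝ) :
    asymE p a b (r * s) = r ^ p * asymE p a b s := by
  simp only [asymE, ← mul_neg, max_mul_zero_rpow hr]
  ring

theorem asymFlux_mul_of_nonneg {r : ℝ} (hr : 0 ≤ r) (s : ℝ) :
    asymFlux p a b (r * s) = r ^ (p - 1) * asymFlux p a b s := by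
  simp only [asymFlux, ← mul_neg, max_mul_zero_rpow hr]
  ring

theorem asymFlux_mul_self (hp0 : p ≠ 0) (hp1 : p ≠ 1) (s : ℝ) :
    asymFlux p a b s * s = asymE p a b s := by
  rw [asymE, ← max_zero_rpow_sub_one_mul_self hp0 hp1 s,
    ← max_zero_rpow_sub_one_mul_self hp0 hp1 (-s), asymFlux]
  ring

theorem asymFlux_mul_le (ha : 0 ≤ a) (hb : 0 ≤ b) (w x : ℝ) :
    asymFlux p a b w * x ≤
      a ^ p * (max w 0 ^ (p - 1) * max x 0) + b ^ p * (max (-w) 0 ^ (p - 1) * max (-x) 0) := by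
  calc asymFlux p a b w * x
      = a ^ p * (max w 0 ^ (p - 1) * x) + b ^ p * (max (-w) 0 ^ (p - 1) * -x) := by
        rw [asymFlux]
        ring
    _ ≤ _ := by
        gcongr <;> exact le_max_left _ _

theorem mul_asymFlux_mul_le_asymE_add (hp : 1 < p) (ha : 0 ≤ a) (hb : 0 ≤ b) (w x : ℝ) :
    p * (asymFlux p a b w * x) ≤ asymE p a b x + (p - 1) * asymE p a b w := by
  calc p * (asymFlux p a b w * x)
      ≤ p * (a ^ p * (max w 0 ^ (p - 1) * max x 0) +
          b ^ p * (max (-w) 0 ^ (p - 1) * max (-x) 0)) := by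
        gcongr
        exact asymFlux_mul_le ha hb w x
    _ = a ^ p * (p * (max w 0 ^ (p - 1) * max x 0)) +
          b ^ p * (p * (max (-w) 0 ^ (p - 1) * max (-x) 0)) := by ring
    _ ≤ a ^ p * (max x 0 ^ p + (p - 1) * max w 0 ^ p) +
          b ^ p * (max (-x) 0 ^ p + (p - 1) * max (-w) 0 ^ p) := by
        gcongr <;> exact mul_rpow_sub_one_mul_le hp (le_max_right _ _) (le_max_right _ _)
    _ = asymE p a b x + (p - 1) * asymE p a b w := by
        rw [asymE, asymE]
        ring

end AsymmetricEnergy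

theorem stmt9 (p a b : ℝ) (hp : 1 < p) (ha : 0 < a) (hb : 0 < b)
    (c d : ℝ) (u v u' v' : ℝ → ℝ)
    (hu : ∀ t ∈ Set.Ioo c d, HasDerivAt u (u' t) t)
    (hv : ∀ t ∈ Set.Ioo c d, HasDerivAt v (v' t) t)
    (hu0 : ∀ t ∈ Set.Ioo c d, 0 ≤ u t)
    (hv0 : ∀ t ∈ Set.Ioo c d, 0 < v t) :
    ∀ t ∈ Set.Ioo c d,
      deriv (fun s => u s ^ p / v s ^ (p - 1)) t * asymFlux p a b (v' t) ≤
        asymE p a b (u' t) := by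
  intro t ht
  have hr : 0 ≤ u t / v t := div_nonneg (hu0 t ht) (hv0 t ht).le
  have young := mul_asymFlux_mul_le_asymE_add hp ha.le hb.le (u t / v t * v' t) (u' t)
  have euler : asymFlux p a b (v' t) * v' t = asymE p a b (v' t) :=
    asymFlux_mul_self (zero_lt_one.trans hp).ne' hp.ne' (v' t)
  calc deriv (fun s => u s ^ p / v s ^ (p - 1)) t * asymFlux p a b (v' t)
      = (p * (u t / v t) ^ (p - 1) * u' t - (p - 1) * (u t / v t) ^ p * v' t) *
          asymFlux p a b (v' t) := by
        rw [(hasDerivAt_rpow_div_rpow_sub_one (Or.inr hp.le) (hu t ht) (hv t ht) (hu0 t ht)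
          (hv0 t ht)).deriv]
    _ = p * (asymFlux p a b (u t / v t * v' t) * u' t) -
          (p - 1) * asymE p a b (u t / v t * v' t) := by
        rw [asymFlux_mul_of_nonneg hr, asymE_mul_of_nonneg hr, ← euler]
        ring
    _ ≤ asymE p a b (u' t) := sub_le_iff_le_add.mpr young
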